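/- For every integer n ≥ 1, the unrefined ASM generating function with bulk parameters related by y = x+1 satisfies Z_n(x,x+1) = (x+1)^{n(n−1)/2}, as an identity of polynomials in ℤ[x]. In other words, Σ_{A an ASM of size n} x^{ν(A)}·(x+1)^{μ(A)} = (x+1)^{n(n−1)/2}. -/

import Mathlib

open Finset

/-- The `n × n` integer matrix encoded by `e`, with entries in `{-1, 0, 1}`. -/
def asmMat {n : ℕ} (e : Fin n → Fin n → Fin 3) : Fin n → Fin n → ℤ :=
  fun i j => (e i j : ℤ) - 1

/-- `A` is an alternating sign matrix: all entries lie in `{-1, 0, 1}`, every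
partial row sum and every partial column sum is `0` or `1` (equivalently, the
nonzero entries of each row and of each column alternate in sign), and every
complete row sum and column sum is `1`. -/
def IsASM {n : ℕ} (A : Fin n → Fin n → ℤ) : Prop :=
  (∀ i j, A i j = -1 ∨ A i j = 0 ∨ A i j = 1) ∧
  (∀ (i j : Fin n), (∑ j' ∈ univ.filter (fun j' : Fin n => j' ≤ j), A i j') = 0 ∨
    (∑ j' ∈ univ.filter (fun j' : Fin n => j' ≤ j), A i j') = 1) ∧
  (∀ (i j : Fin n), (∑ i' ∈ univ.filter (fun i' : Fin n => i' ≤ i), A i' j) = 0 ∨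
    (∑ i' ∈ univ.filter (fun i' : Fin n => i' ≤ i), A i' j) = 1) ∧
  (∀ i : Fin n, (∑ j, A i j) = 1) ∧
  (∀ j : Fin n, (∑ i, A i j) = 1)

/-- `ν(A)`, the number of generalized inversions of `A`. -/
def nuASM {n : ℕ} (A : Fin n → Fin n → ℤ) : ℕ :=
  (∑ i : Fin n, ∑ i' : Fin n, ∑ j : Fin n, ∑ j' : Fin n,
      if i < i' ∧ j' ≤ j then A i j * A i' j' else 0).toNat

/-- `μ(A)`, the number of entries of `A` equal to `-1`. -/
def muASM {n : ℕ} (A : Fin n → Fin n → ℤ) : ℕ :=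
  (univ.filter (fun p : Fin n × Fin n => A p.1 p.2 = -1)).card

/-- `ρT(A)`, the number of `0`'s to the left of the `1` in the top row of `A`. -/
def rhoT {n : ℕ} (A : Fin n → Fin n → ℤ) : ℕ :=
  (univ.filter (fun j : Fin n =>
    A ⟨0, j.pos⟩ j = 0 ∧ ∃ j' : Fin n, j < j' ∧ A ⟨0, j.pos⟩ j' = 1)).card

/-- `ρR(A)`, the number of `0`'s below the `1` in the right-most column of `A`. -/
def rhoR {n : ℕ} (A : Fin n → Fin n → ℤ) : ℕ :=
  (univ.filter (fun i : Fin n =>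
    A i ⟨n - 1, Nat.sub_lt i.pos Nat.one_pos⟩ = 0 ∧
      ∃ i' : Fin n, i' < i ∧ A i' ⟨n - 1, Nat.sub_lt i.pos Nat.one_pos⟩ = 1)).card

/-- `ρB(A)`, the number of `0`'s to the right of the `1` in the bottom row of `A`. -/
def rhoB {n : ℕ} (A : Fin n → Fin n → ℤ) : ℕ :=
  (univ.filter (fun j : Fin n =>
    A ⟨n - 1, Nat.sub_lt j.pos Nat.one_pos⟩ j = 0 ∧
      ∃ j' : Fin n, j' < j ∧ A ⟨n - 1, Nat.sub_lt j.pos Nat.one_pos⟩ j' = 1)).card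

/-- `ρL(A)`, the number of `0`'s above the `1` in the left-most column of `A`. -/
def rhoL {n : ℕ} (A : Fin n → Fin n → ℤ) : ℕ :=
  (univ.filter (fun i : Fin n =>
    A i ⟨0, i.pos⟩ = 0 ∧ ∃ i' : Fin n, i < i' ∧ A i' ⟨0, i.pos⟩ = 1)).card

open Classical in
/-- The quadruply-refined ASM generating function
`Zqua_n(x,y;z1,z2,z3,z4) = Σ_A x^{ν(A)} y^{μ(A)} z1^{ρT(A)} z2^{ρR(A)} z3^{ρB(A)} z4^{ρL(A)}`. -/
noncomputable def Zqua (n : ℕ) {R : Type*} [CommRing R] (x y z1 z2 z3 z4 : R) : R :=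
  ∑ e : Fin n → Fin n → Fin 3,
    if IsASM (asmMat e) then
      x ^ nuASM (asmMat e) * y ^ muASM (asmMat e) * z1 ^ rhoT (asmMat e) *
        z2 ^ rhoR (asmMat e) * z3 ^ rhoB (asmMat e) * z4 ^ rhoL (asmMat e)
    else 0

/-- Adjacent-boundary doubly-refined generating function `Zadj_n(x,y;z1,z2)`. -/
noncomputable def Zadj (n : ℕ) {R : Type*} [CommRing R] (x y z1 z2 : R) : R :=
  Zqua n x y z1 1 1 z2

/-- Alternative adjacent-boundary doubly-refined generating function `Zbaradj_n(x,y;z1,z2)`. -/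
noncomputable def Zbaradj (n : ℕ) {R : Type*} [CommRing R] (x y z1 z2 : R) : R :=
  Zqua n x y z1 z2 1 1

/-- Triply-refined generating function `Ztri_n(x,y;z1,z2,z3)`. -/
noncomputable def Ztri (n : ℕ) {R : Type*} [CommRing R] (x y z1 z2 z3 : R) : R :=
  Zqua n x y z1 1 z2 z3

/-- Opposite-boundary doubly-refined generating function `Zopp_n(x,y;z1,z2)`. -/
noncomputable def Zopp (n : ℕ) {R : Type*} [CommRing R] (x y z1 z2 : R) : R :=
  Zqua n x y z1 1 z2 1

/-- Singly-refined generating function `Z_n(x,y;z)`. -/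
noncomputable def Zsing (n : ℕ) {R : Type*} [CommRing R] (x y z : R) : R :=
  Zqua n x y z 1 1 1

/-- Unrefined generating function `Z_n(x,y)`.  Note `Zun 0 x y = 1`. -/
noncomputable def Zun (n : ℕ) {R : Type*} [CommRing R] (x y : R) : R :=
  Zqua n x y 1 1 1 1



/-- `c` restricts on `{0, …, n}²` to the corner-sum matrix of an `n × n` alternating sign matrix. -/
structure IsCornerSum (n : ℕ) (c : ℕ → ℕ → ℤ) : Prop where
  left : ∀ i ≤ n, c i 0 = 0
  top : ∀ j ≤ n, c 0 j = 0
  right : ∀ i ≤ n, c i n = i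
  bottom : ∀ j ≤ n, c n j = j
  row : ∀ i ≤ n, ∀ j < n, c i j ≤ c i (j + 1) ∧ c i (j + 1) ≤ c i j + 1
  col : ∀ i < n, ∀ j ≤ n, c i j ≤ c (i + 1) j ∧ c (i + 1) j ≤ c i j + 1

/-- The interlacing relation between corner-sum matrices of sizes `n` and `n + 1`. -/
def Interlace (n : ℕ) (c d : ℕ → ℕ → ℤ) : Prop :=
  ∀ i ≤ n, ∀ j ≤ n, (d i j ≤ c i j ∧ d (i + 1) (j + 1) - 1 ≤ c i j) ∧
    (c i j ≤ d (i + 1) j ∧ c i j ≤ d i (j + 1))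

/-- The function on `ℕ × ℕ` attached to a function on `{0, …, n}²`. -/
def grid {n : ℕ} (c : Fin (n + 1) × Fin (n + 1) → ℤ) : ℕ → ℕ → ℤ :=
  fun i j => c (Fin.ofNat (n + 1) i, Fin.ofNat (n + 1) j)

lemma grid_val {n : ℕ} (c : Fin (n + 1) × Fin (n + 1) → ℤ) (p : Fin (n + 1) × Fin (n + 1)) :
    grid c p.1 p.2 = c p := by
  simp [grid]

lemma grid_of_le {n : ℕ} (g : ℕ → ℕ → ℤ) {i j : ℕ} (hi : i ≤ n) (hj : j ≤ n) :
    grid (fun p : Fin (n + 1) × Fin (n + 1) => g p.1 p.2) i j = g i j := by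
  simp [grid, Nat.mod_eq_of_lt (Nat.lt_succ_of_le hi), Nat.mod_eq_of_lt (Nat.lt_succ_of_le hj)]

lemma IsCornerSum.congr {n : ℕ} {c d : ℕ → ℕ → ℤ} (hc : IsCornerSum n c)
    (h : ∀ i ≤ n, ∀ j ≤ n, d i j = c i j) : IsCornerSum n d where
  left i hi := by rw [h i hi 0 n.zero_le, hc.left i hi]
  top j hj := by rw [h 0 n.zero_le j hj, hc.top j hj]
  right i hi := by rw [h i hi n le_rfl, hc.right i hi]
  bottom j hj := by rw [h n le_rfl j hj, hc.bottom j hj]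
  row i hi j hj := by rw [h i hi j hj.le, h i hi (j + 1) hj]; exact hc.row i hi j hj
  col i hi j hj := by rw [h i hi.le j hj, h (i + 1) hi j hj]; exact hc.col i hi j hj

lemma IsCornerSum.mem_Icc {n : ℕ} {c : ℕ → ℕ → ℤ} (hc : IsCornerSum n c) {i j : ℕ}
    (hi : i ≤ n) (hj : j ≤ n) : 0 ≤ c i j ∧ c i j ≤ j := by
  induction j with
  | zero => simp [hc.left i hi]
  | succ j ih =>
    have h := ih (by omega)
    have h' := hc.row i hi j hj
    push_cast
    omega

open Classical in
/-- The finite set of corner-sum matrices of size `n`. -/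
noncomputable def corners (n : ℕ) : Finset (Fin (n + 1) × Fin (n + 1) → ℤ) :=
  (Fintype.piFinset fun _ => Icc (0 : ℤ) n).filter fun c => IsCornerSum n (grid c)

lemma mem_corners {n : ℕ} {c : Fin (n + 1) × Fin (n + 1) → ℤ} :
    c ∈ corners n ↔ IsCornerSum n (grid c) := by
  simp only [corners, mem_filter, Fintype.mem_piFinset, Finset.mem_Icc, and_iff_right_iff_imp]
  intro hc p
  have h := hc.mem_Icc (Nat.le_of_lt_succ p.1.2) (Nat.le_of_lt_succ p.2.2)
  rw [grid_val] at h
  have := p.2.2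
  omega

lemma IsCornerSum.of_interlace {n : ℕ} {c d : ℕ → ℕ → ℤ} (hd : IsCornerSum (n + 1) d)
    (h : Interlace n c d) : IsCornerSum n c where
  left i hi := by
    have := h i hi 0 n.zero_le
    have := hd.left i (by omega)
    have := hd.left (i + 1) (by omega)
    omega
  top j hj := by
    have := h 0 n.zero_le j hj
    have := hd.top j (by omega)
    have := hd.top (j + 1) (by omega)
    omega
  right i hi := by
    have := h i hi n le_rfl
    have := hd.right i (by omega)
    have := hd.right (i + 1) (by omega)
    omega
  bottom j hj := by
    have := h n le_rfl j hj
    have := hd.bottom j (by omega)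
    have := hd.bottom (j + 1) (by omega)
    omega
  row i hi j hj := by
    have := h i hi j hj.le
    have := h i hi (j + 1) hj
    omega
  col i hi j hj := by
    have := h i hi.le j hj
    have := h (i + 1) hi j hj
    omega

/-- The values allowed at `(i, j)` for a corner-sum matrix of size `n + 1` that interlaces
with `c`. -/
noncomputable def choices (n : ℕ) (c : ℕ → ℕ → ℤ) (i j : ℕ) : Finset ℤ :=
  if i = 0 ∨ j = 0 then {0} else if i = n + 1 then {(j : ℤ)} else if j = n + 1 then {(i : ℤ)} else
    Icc (max (c i (j - 1)) (c (i - 1) j)) (min (c i j) (c (i - 1) (j - 1) + 1))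

lemma mem_choices_interior {n : ℕ} {c : ℕ → ℕ → ℤ} {i j : ℕ} (hi : i < n) (hj : j < n) {v : ℤ} :
    v ∈ choices n c (i + 1) (j + 1) ↔ (c (i + 1) j ≤ v ∧ c i (j + 1) ≤ v) ∧
      (v ≤ c (i + 1) (j + 1) ∧ v ≤ c i j + 1) := by
  simp [choices, hi.ne, hj.ne]

lemma interlace_of_mem_choices {n : ℕ} {c d : ℕ → ℕ → ℤ} (hc : IsCornerSum n c)
    (h : ∀ i ≤ n + 1, ∀ j ≤ n + 1, d i j ∈ choices n c i j) :
    IsCornerSum (n + 1) d ∧ Interlace n c d := by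
  have left : ∀ i ≤ n + 1, d i 0 = 0 := fun i hi => by
    simpa [choices] using h i hi 0 (Nat.zero_le _)
  have top : ∀ j ≤ n + 1, d 0 j = 0 := fun j hj => by
    simpa [choices] using h 0 (Nat.zero_le _) j hj
  have bottom : ∀ j ≤ n + 1, d (n + 1) j = j := fun j hj => by
    rcases j with _ | j
    · simpa using left (n + 1) le_rfl
    · simpa [choices] using h (n + 1) le_rfl (j + 1) hj
  have right : ∀ i ≤ n + 1, d i (n + 1) = i := fun i hi => by
    rcases eq_or_ne i (n + 1) with rfl | hi'
    · exact bottom _ le_rfl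
    rcases i with _ | i
    · simpa using top (n + 1) le_rfl
    · simpa [choices, show i ≠ n by omega] using h (i + 1) hi (n + 1) le_rfl
  have inner : ∀ i < n, ∀ j < n, (c (i + 1) j ≤ d (i + 1) (j + 1) ∧ c i (j + 1) ≤ d (i + 1) (j + 1))
      ∧ (d (i + 1) (j + 1) ≤ c (i + 1) (j + 1) ∧ d (i + 1) (j + 1) ≤ c i j + 1) :=
    fun i hi j hj => (mem_choices_interior hi hj).1 (h (i + 1) (by omega) (j + 1) (by omega))
  have key : Interlace n c d := by
    intro i hi j hj
    refine ⟨⟨?_, ?_⟩, ?_, ?_⟩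
    · rcases i with _ | i
      · rw [top j (by omega), hc.top j hj]
      rcases j with _ | j
      · rw [left (i + 1) (by omega), hc.left _ hi]
      exact (inner i hi j hj).2.1
    · rcases eq_or_lt_of_le hi with rfl | hi'
      · rw [bottom (j + 1) (by omega), hc.bottom j hj]; simp
      rcases eq_or_lt_of_le hj with rfl | hj'
      · rw [right (i + 1) (by omega), hc.right i hi]; simp
      have := inner i hi' j hj'
      omega
    · rcases eq_or_lt_of_le hi with rfl | hi'
      · rw [bottom j (by omega), hc.bottom j hj]
      rcases j with _ | j
      · rw [left (i + 1) (by omega), hc.left _ hi]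
      exact (inner i hi' j hj).1.2
    · rcases eq_or_lt_of_le hj with rfl | hj'
      · rw [right i (by omega), hc.right i hi]
      rcases i with _ | i
      · rw [top (j + 1) (by omega), hc.top _ hj]
      exact (inner i hi j hj').1.1
  refine ⟨⟨left, top, right, bottom, fun i hi j hj => ⟨?_, ?_⟩, fun i hi j hj => ⟨?_, ?_⟩⟩, key⟩
  · rcases eq_or_lt_of_le hi with rfl | hi'
    · rw [bottom j (by omega), bottom (j + 1) (by omega)]; simp
    have := key i (by omega) j (by omega)
    omega
  · rcases i with _ | i
    · rw [top j (by omega), top (j + 1) (by omega)]; simp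
    have := key i (by omega) j (by omega)
    omega
  · rcases eq_or_lt_of_le hj with rfl | hj'
    · rw [right i (by omega), right (i + 1) (by omega)]; simp
    have := key i (by omega) j (by omega)
    omega
  · rcases j with _ | j
    · rw [left i (by omega), left (i + 1) (by omega)]; simp
    have := key i (by omega) j (by omega)
    omega

lemma mem_choices_of_interlace {n : ℕ} {c d : ℕ → ℕ → ℤ} (hd : IsCornerSum (n + 1) d)
    (h : Interlace n c d) {i j : ℕ} (hi : i ≤ n + 1) (hj : j ≤ n + 1) :
    d i j ∈ choices n c i j := by
  rcases i with _ | i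
  · simp [choices, hd.top j hj]
  rcases j with _ | j
  · simp [choices, hd.left _ hi]
  rcases eq_or_lt_of_le hi with hi' | hi'
  · rw [hi', hd.bottom _ hj]; simp [choices]
  rcases eq_or_lt_of_le hj with hj' | hj'
  · rw [hj', hd.right _ hi]; simp [choices, show i ≠ n by omega]
  rw [mem_choices_interior (by omega) (by omega)]
  have := h (i + 1) (by omega) j (by omega)
  have := h i (by omega) (j + 1) (by omega)
  have := h (i + 1) (by omega) (j + 1) (by omega)
  have := h i (by omega) j (by omega)
  omega

section Weights

variable {R : Type*} [CommRing R]

/-- The weight of the cell with corner sums `a`, `b`, `c`, `d` (top left, top right, bottom left,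
bottom right): inversions have weight `x`, entries `-1` have weight `x + 1`. -/
def cellWeight (x : R) (a b c d : ℤ) : R :=
  (if d = a + 2 then x else 1) * (x + 1) ^ (b + c - a - d).toNat

/-- The product of all cell weights. -/
def cornerWeight (n : ℕ) (x : R) (c : ℕ → ℕ → ℤ) : R :=
  ∏ i ∈ range n, ∏ j ∈ range n, cellWeight x (c i j) (c i (j + 1)) (c (i + 1) j) (c (i + 1) (j + 1))

/-- The weight of an interlacing pair. -/
def pairWeight (n : ℕ) (x : R) (c d : ℕ → ℕ → ℤ) : R :=
  ∏ i ∈ range (n + 1), ∏ j ∈ range (n + 1), x ^ (c i j - d i j).toNat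

lemma sum_Icc_eq_cellWeight (x : R) {a b c d : ℤ} (hb : a ≤ b ∧ b ≤ a + 1) (hc : a ≤ c ∧ c ≤ a + 1)
    (hd : b ≤ d ∧ d ≤ b + 1) (hd' : c ≤ d ∧ d ≤ c + 1) :
    ∑ v ∈ Icc (max a (d - 1)) (min c b), x ^ (v - a).toNat = cellWeight x a b c d := by
  by_cases h : b = a + 1 ∧ c = a + 1
  · obtain ⟨rfl, rfl⟩ := h
    obtain rfl | rfl : d = a + 1 ∨ d = a + 2 := by omega
    · rw [show Icc (max a (a + 1 - 1)) (min (a + 1) (a + 1)) = {a, a + 1} by ext; simp; omega]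
      simp [cellWeight, show a + 1 + (a + 1) - a - (a + 1) = 1 by ring, add_comm]
    · rw [show Icc (max a (a + 2 - 1)) (min (a + 1) (a + 1)) = {a + 1} by ext; simp; omega]
      simp [cellWeight, show a + 1 + (a + 1) - a - (a + 2) = 0 by ring]
  · rw [show Icc (max a (d - 1)) (min c b) = {a} by ext; simp; omega]
    simp [cellWeight, show (b + c - a - d).toNat = 0 by omega, show d ≠ a + 2 by omega]

lemma sum_Icc_eq_cellWeight' (x : R) {a b c d : ℤ} (hb : a ≤ b ∧ b ≤ a + 1)
    (hc : a ≤ c ∧ c ≤ a + 1) (hd : b ≤ d ∧ d ≤ b + 1) (hd' : c ≤ d ∧ d ≤ c + 1) :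
    ∑ v ∈ Icc (max c b) (min d (a + 1)), x ^ (d - v).toNat =
      (if d = a + 2 then x else 1) * (x + 1) ^ (a + d - b - c).toNat := by
  by_cases h : b = a ∧ c = a ∧ d = a + 1
  · obtain ⟨rfl, rfl, rfl⟩ := h
    rw [show Icc (max c c) (min (c + 1) (c + 1)) = {c, c + 1} by ext; simp; omega]
    simp
  have h0 : (a + d - b - c).toNat = 0 := by omega
  by_cases h2 : d = a + 2
  · rw [show Icc (max c b) (min d (a + 1)) = {a + 1} by ext; simp; omega]
    rw [h0]
    simp [h2, show a + 2 - (a + 1) = 1 by ring]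
  · rw [show Icc (max c b) (min d (a + 1)) = {d} by ext; simp; omega]
    simp [h0, h2]

lemma prod_fin_prod_fin (m : ℕ) (F : ℕ → ℕ → R) :
    ∏ p : Fin m × Fin m, F p.1 p.2 = ∏ i ∈ range m, ∏ j ∈ range m, F i j := by
  simp_rw [Fintype.prod_prod_type, prod_range]

lemma prod_range_eq_prod_interior (n : ℕ) (F : ℕ → ℕ → R) (h₁ : ∀ i, F i 0 = 1)
    (h₂ : ∀ j, F 0 j = 1) (h₃ : ∀ i, F i (n + 1) = 1) (h₄ : ∀ j, F (n + 1) j = 1) :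
    ∏ i ∈ range (n + 2), ∏ j ∈ range (n + 2), F i j =
      ∏ i ∈ range n, ∏ j ∈ range n, F (i + 1) (j + 1) := by
  simp_rw [prod_range_succ _ (n + 1), h₃, h₄, prod_range_succ', h₁, h₂]
  simp

lemma sum_pairWeight_interlace (n : ℕ) (x : R) {d : ℕ → ℕ → ℤ} (hd : IsCornerSum (n + 1) d)
    [DecidablePred fun c : Fin (n + 1) × Fin (n + 1) → ℤ => Interlace n (grid c) d] :
    ∑ c ∈ corners n with Interlace n (grid c) d, pairWeight n x (grid c) d =
      cornerWeight (n + 1) x d := by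
  have hset : (corners n).filter (fun c => Interlace n (grid c) d) =
      Fintype.piFinset fun p : Fin (n + 1) × Fin (n + 1) =>
        Icc (max (d p.1 p.2) (d (p.1 + 1) (p.2 + 1) - 1))
          (min (d (p.1 + 1) p.2) (d p.1 (p.2 + 1))) := by
    ext c
    simp only [mem_filter, mem_corners, Fintype.mem_piFinset, Finset.mem_Icc, max_le_iff,
      le_min_iff]
    constructor
    · rintro ⟨-, h⟩ p
      have := h p.1 (by omega) p.2 (by omega)
      rwa [grid_val] at this
    · intro h
      have h' : Interlace n (grid c) d := fun i hi j hj => by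
        have := h (⟨i, by omega⟩, ⟨j, by omega⟩)
        rwa [← grid_val c] at this
      exact ⟨hd.of_interlace h', h'⟩
  rw [hset]
  have hw : ∀ c : Fin (n + 1) × Fin (n + 1) → ℤ, pairWeight n x (grid c) d =
      ∏ p, x ^ (c p - d p.1 p.2).toNat := fun c => by
    simp_rw [pairWeight, Fintype.prod_prod_type, prod_range]
    refine prod_congr rfl fun i _ => prod_congr rfl fun j _ => ?_
    rw [← grid_val c]
  simp_rw [hw]
  rw [← prod_univ_sum (fun p : Fin (n + 1) × Fin (n + 1) =>
        Icc (max (d p.1 p.2) (d (p.1 + 1) (p.2 + 1) - 1))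
          (min (d (p.1 + 1) p.2) (d p.1 (p.2 + 1)))) (fun p v => x ^ (v - d p.1 p.2).toNat)]
  simp_rw [cornerWeight, Fintype.prod_prod_type, prod_range]
  refine prod_congr rfl fun i _ => prod_congr rfl fun j _ => ?_
  exact sum_Icc_eq_cellWeight x (hd.row _ (by omega) _ (by omega)) (hd.col _ (by omega) _ (by omega))
    (hd.col _ (by omega) _ (by omega)) (hd.row _ (by omega) _ (by omega))

lemma sum_cell_toNat {n : ℕ} {c : ℕ → ℕ → ℤ} (hc : IsCornerSum n c) :
    ∑ i ∈ range n, ∑ j ∈ range n,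
      (c i j + c (i + 1) (j + 1) - c i (j + 1) - c (i + 1) j).toNat =
    n + ∑ i ∈ range n, ∑ j ∈ range n,
      (c i (j + 1) + c (i + 1) j - c i j - c (i + 1) (j + 1)).toNat := by
  have h : ∑ i ∈ range n, ∑ j ∈ range n,
      (c i j + c (i + 1) (j + 1) - c i (j + 1) - c (i + 1) j) = n := by
    have hrow : ∀ i ∈ range n, ∑ j ∈ range n,
        (c i j + c (i + 1) (j + 1) - c i (j + 1) - c (i + 1) j) = 1 := fun i hi => by
      have hi' := mem_range.1 hi
      have := sum_range_sub (fun j => c (i + 1) j - c i j) n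
      rw [hc.left _ hi', hc.left _ hi'.le, hc.right _ hi', hc.right _ hi'.le] at this
      rw [← sub_eq_zero, ← sub_eq_zero.2 this]
      push_cast
      congr 1
      · exact sum_congr rfl fun j _ => by ring
      · ring
    rw [sum_congr rfl hrow]; simp
  zify
  rw [← h, ← sum_add_distrib]
  refine sum_congr rfl fun i _ => ?_
  rw [← sum_add_distrib]
  refine sum_congr rfl fun j _ => ?_
  omega

lemma sum_pairWeight_interlace' (n : ℕ) (x : R) {c : ℕ → ℕ → ℤ} (hc : IsCornerSum n c)
    [DecidablePred fun d : Fin (n + 2) × Fin (n + 2) → ℤ => Interlace n c (grid d)] :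
    ∑ d ∈ corners (n + 1) with Interlace n c (grid d), pairWeight n x c (grid d) =
      (x + 1) ^ n * cornerWeight n x c := by
  have hset : (corners (n + 1)).filter (fun d => Interlace n c (grid d)) =
      Fintype.piFinset fun p : Fin (n + 2) × Fin (n + 2) => choices n c p.1 p.2 := by
    ext d
    simp only [mem_filter, mem_corners, Fintype.mem_piFinset]
    constructor
    · rintro ⟨hd, h⟩ p
      rw [← grid_val d]
      exact mem_choices_of_interlace hd h (by omega) (by omega)
    · intro h
      refine interlace_of_mem_choices hc fun i hi j hj => ?_
      have := h (⟨i, by omega⟩, ⟨j, by omega⟩)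
      rwa [← grid_val d] at this
  rw [hset]
  set w : ℕ → ℕ → ℤ → R := fun i j v => if i ≤ n ∧ j ≤ n then x ^ (c i j - v).toNat else 1 with hw
  have hpw : ∀ d : Fin (n + 2) × Fin (n + 2) → ℤ, pairWeight n x c (grid d) =
      ∏ p, w p.1 p.2 (d p) := fun d => by
    calc pairWeight n x c (grid d)
        = ∏ i ∈ range (n + 2), ∏ j ∈ range (n + 2), w i j (grid d i j) := by
          have h₁ : ∀ i v, w i (n + 1) v = 1 := fun i v => by simp [hw]
          have h₂ : ∀ j v, w (n + 1) j v = 1 := fun j v => by simp [hw]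
          simp_rw [prod_range_succ _ (n + 1), h₁, h₂]
          simp only [prod_const_one, mul_one, pairWeight]
          refine prod_congr rfl fun i hi => prod_congr rfl fun j hj => ?_
          simp only [hw]
          rw [if_pos ⟨by have := mem_range.1 hi; omega, by have := mem_range.1 hj; omega⟩]
      _ = _ := by
          rw [← prod_fin_prod_fin]
          simp_rw [grid_val]
  simp_rw [hpw]
  rw [← prod_univ_sum (fun p : Fin (n + 2) × Fin (n + 2) => choices n c p.1 p.2)
    (fun p v => w p.1 p.2 v), prod_fin_prod_fin (n + 2) fun i j => ∑ v ∈ choices n c i j, w i j v,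
    prod_range_eq_prod_interior]
  · have hcell : ∀ i ∈ range n, ∀ j ∈ range n,
        ∑ v ∈ choices n c (i + 1) (j + 1), w (i + 1) (j + 1) v =
          (if c (i + 1) (j + 1) = c i j + 2 then x else 1) *
            (x + 1) ^ (c i j + c (i + 1) (j + 1) - c i (j + 1) - c (i + 1) j).toNat := by
      intro i hi j hj
      rw [mem_range] at hi hj
      rw [← sum_Icc_eq_cellWeight' x (hc.row _ (by omega) _ (by omega))
        (hc.col _ (by omega) _ (by omega)) (hc.col _ (by omega) _ (by omega))
        (hc.row _ (by omega) _ (by omega))]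
      simp [choices, hw, hi.ne, hj.ne, Nat.succ_le_of_lt hi, Nat.succ_le_of_lt hj]
    rw [prod_congr rfl fun i hi => prod_congr rfl (hcell i hi)]
    simp_rw [cornerWeight, cellWeight, prod_mul_distrib, prod_pow_eq_pow_sum]
    rw [sum_cell_toNat hc, pow_add]
    ring
  · intro i
    by_cases hi : i ≤ n
    · simp [choices, hw, hc.left i hi]
    · simp [choices, hw, hi]
  · intro j
    by_cases hj : j ≤ n
    · simp [choices, hw, hc.top j hj]
    · simp [choices, hw, hj]
  · intro i
    by_cases hi : i = 0
    · simp [choices, hw, hi]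
    · by_cases hi' : i = n + 1 <;> simp [choices, hw, hi, hi']
  · intro j
    by_cases hj : j = 0 <;> simp [choices, hw, hj]

lemma sum_cornerWeight_succ (n : ℕ) (x : R) :
    ∑ d ∈ corners (n + 1), cornerWeight (n + 1) x (grid d) =
      (x + 1) ^ n * ∑ c ∈ corners n, cornerWeight n x (grid c) := by
  classical
  calc ∑ d ∈ corners (n + 1), cornerWeight (n + 1) x (grid d)
      = ∑ d ∈ corners (n + 1), ∑ c ∈ corners n,
          if Interlace n (grid c) (grid d) then pairWeight n x (grid c) (grid d) else 0 :=
        sum_congr rfl fun d hd => by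
          rw [← sum_pairWeight_interlace n x (mem_corners.1 hd), sum_filter]
    _ = ∑ c ∈ corners n, ∑ d ∈ corners (n + 1),
          if Interlace n (grid c) (grid d) then pairWeight n x (grid c) (grid d) else 0 :=
        sum_comm
    _ = _ := by
        rw [mul_sum]
        refine sum_congr rfl fun c hc => ?_
        rw [← sum_pairWeight_interlace' n x (mem_corners.1 hc), sum_filter]

lemma sum_cornerWeight (n : ℕ) (x : R) :
    ∑ c ∈ corners n, cornerWeight n x (grid c) = (x + 1) ^ (n * (n - 1) / 2) := by
  induction n with
  | zero =>
    have : corners 0 = {0} := by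
      ext c
      rw [mem_corners, mem_singleton]
      constructor
      · intro h
        funext p
        rw [← grid_val c, Prod.ext (Fin.fin_one_eq_zero p.1) (Fin.fin_one_eq_zero p.2) (y := (0, 0))]
        exact h.left 0 le_rfl
      · rintro rfl
        constructor <;> simp [grid]
    simp [this, cornerWeight]
  | succ n ih =>
    rw [sum_cornerWeight_succ, ih, ← pow_add]
    congr 1
    rw [← Finset.sum_range_id, ← Finset.sum_range_id, Finset.sum_range_succ, add_comm]

end Weights

section Matrices

variable {n : ℕ}

/-- The extension of a matrix by zero. -/
def extend (A : Fin n → Fin n → ℤ) (i j : ℕ) : ℤ :=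
  if h : i < n ∧ j < n then A ⟨i, h.1⟩ ⟨j, h.2⟩ else 0

/-- The corner sums of a matrix. -/
def cornerSum (A : Fin n → Fin n → ℤ) (i j : ℕ) : ℤ :=
  ∑ i' ∈ range i, ∑ j' ∈ range j, extend A i' j'

@[simp] lemma extend_val (A : Fin n → Fin n → ℤ) (i j : Fin n) : extend A i j = A i j := by
  simp [extend]

lemma sum_filter_lt_eq (f : ℕ → ℤ) {j : ℕ} (hj : j ≤ n) :
    ∑ k ∈ univ.filter (fun k : Fin n => (k : ℕ) < j), f k = ∑ k ∈ range j, f k := by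
  rw [sum_filter, ← Finset.sum_range fun k => if k < j then f k else 0, ← sum_filter]
  refine sum_congr ?_ fun _ _ => rfl
  ext k
  simp only [mem_filter, mem_range]
  omega

lemma sum_filter_le_eq (f : ℕ → ℤ) (j : Fin n) :
    ∑ k ∈ univ.filter (fun k : Fin n => k ≤ j), f k = ∑ k ∈ range (j + 1), f k := by
  rw [← sum_filter_lt_eq f (n := n) (j := j + 1) (by omega)]
  refine sum_congr ?_ fun _ _ => rfl
  ext k
  simp only [mem_filter, Order.lt_add_one_iff, Fin.val_fin_le]

lemma cornerSum_succ_left (A : Fin n → Fin n → ℤ) (i j : ℕ) :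
    cornerSum A (i + 1) j = cornerSum A i j + ∑ j' ∈ range j, extend A i j' :=
  sum_range_succ _ _

lemma cornerSum_succ_right (A : Fin n → Fin n → ℤ) (i j : ℕ) :
    cornerSum A i (j + 1) = cornerSum A i j + ∑ i' ∈ range i, extend A i' j := by
  simp [cornerSum, sum_range_succ, sum_add_distrib]

lemma extend_eq_cornerSum (A : Fin n → Fin n → ℤ) (i j : ℕ) :
    extend A i j = cornerSum A i j + cornerSum A (i + 1) (j + 1) - cornerSum A i (j + 1) -
      cornerSum A (i + 1) j := by
  rw [cornerSum_succ_left, cornerSum_succ_left, sum_range_succ]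
  ring

lemma isASM_iff_isCornerSum (A : Fin n → Fin n → ℤ) :
    IsASM A ↔ IsCornerSum n (cornerSum A) := by
  have hr : ∀ i j : Fin n, ∑ j' ∈ univ.filter (fun j' : Fin n => j' ≤ j), A i j' =
      cornerSum A (i + 1) (j + 1) - cornerSum A i (j + 1) := fun i j => by
    rw [cornerSum_succ_left, ← sum_filter_le_eq (fun k => extend A i k)]
    simp
  have hcol : ∀ i j : Fin n, ∑ i' ∈ univ.filter (fun i' : Fin n => i' ≤ i), A i' j =
      cornerSum A (i + 1) (j + 1) - cornerSum A (i + 1) j := fun i j => by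
    rw [cornerSum_succ_right, ← sum_filter_le_eq (fun k => extend A k j)]
    simp
  have hr' : ∀ i : Fin n, ∑ j, A i j = cornerSum A (i + 1) n - cornerSum A i n := fun i => by
    rw [cornerSum_succ_left, Finset.sum_range]
    simp
  have hcol' : ∀ j : Fin n, ∑ i, A i j = cornerSum A n (j + 1) - cornerSum A n j := fun j => by
    rw [cornerSum_succ_right, Finset.sum_range]
    simp
  have hA : ∀ i j : Fin n, A i j = cornerSum A i j + cornerSum A (i + 1) (j + 1) -
      cornerSum A i (j + 1) - cornerSum A (i + 1) j := fun i j => by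
    rw [← extend_eq_cornerSum, extend_val]
  have h0 : ∀ i, cornerSum A i 0 = 0 := fun i => by simp [cornerSum]
  have h0' : ∀ j, cornerSum A 0 j = 0 := fun j => by simp [cornerSum]
  unfold IsASM
  simp_rw [hr, hcol, hr', hcol', hA]
  constructor
  · rintro ⟨-, h₁, h₂, h₃, h₄⟩
    refine ⟨fun i _ => h0 i, fun j _ => h0' j, fun i hi => ?_, fun j hj => ?_,
      fun i hi j hj => ?_, fun i hi j hj => ?_⟩
    · induction i with
      | zero => simp [h0']
      | succ i ih =>
        have := h₃ ⟨i, hi⟩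
        have := ih (by omega)
        simp only at *
        push_cast
        omega
    · induction j with
      | zero => simp [h0]
      | succ j ih =>
        have := h₄ ⟨j, hj⟩
        have := ih (by omega)
        simp only at *
        push_cast
        omega
    · rcases i with _ | i
      · simp [h0']
      · have := h₂ ⟨i, hi⟩ ⟨j, hj⟩
        simp only at this
        omega
    · rcases j with _ | j
      · simp [h0]
      · have := h₁ ⟨i, hi⟩ ⟨j, hj⟩
        simp only at this
        omega
  · intro h
    refine ⟨fun i j => ?_, fun i j => ?_, fun i j => ?_, fun i => ?_, fun j => ?_⟩
    · have := h.row i (by omega) j (by omega)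
      have := h.row (i + 1) (by omega) j (by omega)
      omega
    · have := h.col i (by omega) (j + 1) (by omega)
      omega
    · have := h.row (i + 1) (by omega) j (by omega)
      omega
    · rw [h.right _ (by omega), h.right _ (by omega)]; simp
    · rw [h.bottom _ (by omega), h.bottom _ (by omega)]; simp

lemma nuASM_eq_card {A : Fin n → Fin n → ℤ} (hA : IsCornerSum n (cornerSum A)) :
    nuASM A = (univ.filter fun p : Fin n × Fin n =>
      cornerSum A (p.1 + 1) (p.2 + 1) = cornerSum A p.1 p.2 + 2).card := by
  have key : ∑ i : Fin n, ∑ i' : Fin n, ∑ j : Fin n, ∑ j' : Fin n,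
      (if i < i' ∧ j' ≤ j then A i j * A i' j' else 0) =
      ∑ p : Fin n × Fin n,
        if cornerSum A (p.1 + 1) (p.2 + 1) = cornerSum A p.1 p.2 + 2 then 1 else 0 := by
    rw [sum_comm, Fintype.sum_prod_type]
    refine sum_congr rfl fun i' _ => ?_
    rw [sum_comm]
    refine sum_congr rfl fun j _ => ?_
    have h₁ : ∑ i ∈ univ.filter (fun i : Fin n => i < i'), A i j =
        cornerSum A i' (j + 1) - cornerSum A i' j := by
      have := sum_filter_lt_eq (n := n) (fun k => extend A k j) i'.2.le
      rw [cornerSum_succ_right, ← this]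
      simp
    have h₂ : ∑ j' ∈ univ.filter (fun j' : Fin n => j' ≤ j), A i' j' =
        cornerSum A (i' + 1) (j + 1) - cornerSum A i' (j + 1) := by
      rw [cornerSum_succ_left, ← sum_filter_le_eq (fun k => extend A i' k)]
      simp
    have h₃ : ∑ i : Fin n, ∑ j' : Fin n, (if i < i' ∧ j' ≤ j then A i j * A i' j' else 0) =
        (∑ i ∈ univ.filter (fun i : Fin n => i < i'), A i j) *
          ∑ j' ∈ univ.filter (fun j' : Fin n => j' ≤ j), A i' j' := by
      rw [sum_mul_sum, sum_filter]
      refine sum_congr rfl fun i _ => ?_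
      rw [sum_filter]
      split_ifs with h <;> simp [h]
    rw [h₃, h₁, h₂]
    dsimp only
    have ha := hA.row i' (by omega) j (by omega)
    have hb := hA.col i' (by omega) (j + 1) (by omega)
    obtain h | h : cornerSum A i' (j + 1) = cornerSum A i' j ∨
      cornerSum A i' (j + 1) = cornerSum A i' j + 1 := by omega
    · rw [if_neg (by omega), h]; simp
    · rw [h] at hb ⊢
      split_ifs with h'
      · rw [h']; ring
      · rw [show cornerSum A (i' + 1) (j + 1) = cornerSum A i' j + 1 by omega]; ring
  rw [nuASM, key]
  simp

lemma muASM_eq_sum {A : Fin n → Fin n → ℤ} (hA : IsASM A) :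
    muASM A = ∑ p : Fin n × Fin n, (-A p.1 p.2).toNat := by
  rw [muASM, card_filter]
  refine sum_congr rfl fun p _ => ?_
  obtain h | h | h := hA.1 p.1 p.2 <;> simp [h]

lemma cornerWeight_cornerSum {R : Type*} [CommRing R] (x : R) {A : Fin n → Fin n → ℤ}
    (hA : IsASM A) :
    cornerWeight n x (cornerSum A) = x ^ nuASM A * (x + 1) ^ muASM A := by
  rw [nuASM_eq_card ((isASM_iff_isCornerSum A).1 hA), muASM_eq_sum hA, cornerWeight,
    ← prod_fin_prod_fin n fun i j => cellWeight x (cornerSum A i j) (cornerSum A i (j + 1))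
      (cornerSum A (i + 1) j) (cornerSum A (i + 1) (j + 1))]
  simp_rw [cellWeight, prod_mul_distrib, prod_pow_eq_pow_sum]
  rw [prod_ite, prod_const, prod_const_one, mul_one]
  congr 2
  refine sum_congr rfl fun p _ => ?_
  rw [← extend_val A, extend_eq_cornerSum]
  congr 1
  ring

lemma cornerSum_injective {A B : Fin n → Fin n → ℤ}
    (h : ∀ i ≤ n, ∀ j ≤ n, cornerSum A i j = cornerSum B i j) : A = B := by
  funext i j
  rw [← extend_val A, ← extend_val B, extend_eq_cornerSum, extend_eq_cornerSum,
    h _ (by omega) _ (by omega), h _ (by omega) _ (by omega), h _ (by omega) _ (by omega),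
    h _ (by omega) _ (by omega)]

lemma exists_cornerSum_eq {c : ℕ → ℕ → ℤ} (hc : IsCornerSum n c) :
    ∃ e : Fin n → Fin n → Fin 3, ∀ i ≤ n, ∀ j ≤ n, cornerSum (asmMat e) i j = c i j := by
  have hb : ∀ i j : Fin n, 0 ≤ c i j + c (i + 1) (j + 1) - c i (j + 1) - c (i + 1) j + 1 ∧
      c i j + c (i + 1) (j + 1) - c i (j + 1) - c (i + 1) j + 1 < 3 := fun i j => by
    have := hc.row i (by omega) j (by omega)
    have := hc.row (i + 1) (by omega) j (by omega)
    omega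
  refine ⟨fun i j => ⟨(c i j + c (i + 1) (j + 1) - c i (j + 1) - c (i + 1) j + 1).toNat, by
    have := hb i j; omega⟩, fun i hi j hj => ?_⟩
  set A : Fin n → Fin n → ℤ := asmMat _ with hA
  have hA' : ∀ i j : Fin n, A i j = c i j + c (i + 1) (j + 1) - c i (j + 1) - c (i + 1) j :=
    fun i j => by
      have := hb i j
      simp only [hA, asmMat]
      omega
  clear_value A
  induction i with
  | zero => simp [cornerSum, hc.top j hj]
  | succ i ih =>
    have h := sum_range_sub (fun j => c (i + 1) j - c i j) j
    rw [hc.left _ hi, hc.left i (by omega)] at h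
    rw [cornerSum_succ_left, ih (by omega), ← eq_sub_iff_add_eq']
    rw [sub_zero, sub_zero] at h
    rw [← h]
    refine sum_congr rfl fun k hk => ?_
    rw [mem_range] at hk
    rw [show extend A i k = _ from extend_val A ⟨i, hi⟩ ⟨k, by omega⟩, hA']
    ring

end Matrices

lemma asmMat_injective {n : ℕ} : Function.Injective (asmMat (n := n)) := by
  intro e e' h
  funext i j
  have := congrFun (congrFun h i) j
  simp only [asmMat] at this
  ext
  omega

lemma Zun_eq_sum_cornerWeight {R : Type*} [CommRing R] (n : ℕ) (x : R) :
    Zun n x (x + 1) = ∑ c ∈ corners n, cornerWeight n x (grid c) := by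
  classical
  rw [Zun, Zqua, ← sum_filter]
  refine sum_bij (fun e _ => fun p => cornerSum (asmMat e) p.1 p.2) ?_ ?_ ?_ ?_
  · intro e he
    rw [mem_corners]
    exact ((isASM_iff_isCornerSum _).1 (mem_filter.1 he).2).congr
      fun i hi j hj => grid_of_le _ hi hj
  · intro e _ e' _ h
    refine asmMat_injective (cornerSum_injective fun i hi j hj => ?_)
    exact congrFun h (⟨i, by omega⟩, ⟨j, by omega⟩)
  · intro c hc
    rw [mem_corners] at hc
    obtain ⟨e, he⟩ := exists_cornerSum_eq hc
    refine ⟨e, mem_filter.2 ⟨mem_univ _, (isASM_iff_isCornerSum _).2 (hc.congr he)⟩, ?_⟩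
    funext p
    rw [he _ (by omega) _ (by omega), grid_val]
  · intro e he
    simp only [one_pow, mul_one]
    rw [← cornerWeight_cornerSum x (mem_filter.1 he).2, cornerWeight, cornerWeight]
    refine prod_congr rfl fun i hi => prod_congr rfl fun j hj => ?_
    rw [mem_range] at hi hj
    rw [grid_of_le _ (by omega) (by omega), grid_of_le _ (by omega) (by omega),
      grid_of_le _ (by omega) (by omega), grid_of_le _ (by omega) (by omega)]

/-- The unrefined ASM generating function at `y = x + 1`:
`Σ_A x^{ν(A)} (x+1)^{μ(A)} = (x+1)^{n(n-1)/2}`, stated for all values of the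
variable in any commutative ring, equivalently as an identity of polynomials
in `ℤ[x]`. -/
theorem stmt13 {R : Type*} [CommRing R] (x : R) (n : ℕ) (hn : 1 ≤ n) :
    Zun n x (x + 1) = (x + 1) ^ (n * (n - 1) / 2) := by
  rw [Zun_eq_sum_cornerWeight, sum_cornerWeight]
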